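/- arXiv:2105.10451 — 4 statements merged into one kernel-verified Lean document; each statement's English description precedes it below -/
import Mathlib

section
/- Let ℓ ≥ 1, let α_1,…,α_ℓ ∈ L \ {0} have pairwise distinct norms N_{L/K}(α_j), let 1 ≤ k ≤ ℓn, h ∈ ℕ, and let η ∈ L be such that (−1)^{k·n}·N_{L/K}(η) does not lie in the multiplicative subgroup of K \ {0} generated by {N_{L/K}(α_1),…,N_{L/K}(α_ℓ)}. For every nonzero (f_0,…,f_{k−1}) ∈ L^k, let F_α(β) := Σ_{i=0}^{k−1} f_i·N_i(α)·θ^i(β) + η·θ^h(f_0)·N_k(α)·θ^k(β). Then Σ_{j=1}^{ℓ} dim_K(ker F_{α_j}) ≤ k − 1. Hence the twisted linearized Reed–Solomon code L_k^θ(η,h) := {(F_{α_1},…,F_{α_ℓ}) : (f_0,…,f_{k−1}) ∈ L^k}, a K-subspace of dimension n·k, has minimum sum-rank distance ℓn − k + 1, i.e. is a maximum sum-rank distance code. -/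
/-!
The code is the evaluation of skew polynomials `F = ∑ f_i x^i ∈ L[x; θ]` at the semilinear operators
`D_α : β ↦ α θ(β)`, since `D_α^i(β) = N_i(α) θ^i(β)`. The heart of the proof is
`sum_finrank_ker_le`: a nonzero `F` of degree at most `d` has `∑_j dim ker F(D_{α_j}) ≤ d`, and in
case of equality `f_d ≠ 0` and `N(f_0) = N(f_d) (-1)^{dn} ∏_j N(α_j)^{e_j}` for some exponents.

It is proved by induction on `d`. If `b ≠ 0` lies in the kernel of `F(D_{α_j})`, set
`γ = α_j θ(b) / b`; then `F = G · (x - γ)` by right division (`exists_div`, `skewEval_div`).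
Here `N(γ) = N(α_j)`, so, the norms being distinct, `D_{α_i} - γ` is injective for `i ≠ j`, while its
kernel for `i = j` is the line `K b`. Hence splitting off `x - γ` lowers the total kernel dimension by
at most one, and it multiplies the constant coefficient by `-γ`, of norm `(-1)^n N(α_j)`.

For a twisted polynomial `d = k` and `f_k = η θ^h(f_0)`; equality would give
`(-1)^{kn} N(η) ∈ ⟨N(α_j)⟩`. So the total kernel dimension is at most `k - 1 < ℓ n`. In particular the
encoding map is injective on `L^k`, which gives the dimension `n k` of the code.
-/

noncomputable section

open Finset

variable {K L : Type*} [Field K] [Field L] [Algebra K L]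

/-- The `i`-th truncated norm `N_i(y) = ∏_{j=0}^{i-1} θ^j(y)`. -/
def trunorm (θ : L ≃ₐ[K] L) (i : ℕ) (y : L) : L :=
  ∏ j ∈ Finset.range i, (θ ^ j) y

/-- The map sending coefficients `(f_0,…,f_{k-1})` to the tuple `(F_{α_1},…,F_{α_ℓ})` of
twisted maps `F_α(β) = ∑_{i<k} f_i·N_i(α)·θ^i(β) + η·θ^h(f_0)·N_k(α)·θ^k(β)`. -/
def PhiTw (ℓ : ℕ) (θ : L ≃ₐ[K] L) (α : Fin ℓ → L) (k h : ℕ) (η : L) (f : ℕ → L) :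
    Fin ℓ → L →ₗ[K] L :=
  fun j => (∑ i ∈ Finset.range k, (f i * trunorm θ i (α j)) • (θ ^ i).toLinearMap)
    + (η * (θ ^ h) (f 0) * trunorm θ k (α j)) • (θ ^ k).toLinearMap

theorem trunorm_mul (θ : L ≃ₐ[K] L) (i : ℕ) (x y : L) :
    trunorm θ i (x * y) = trunorm θ i x * trunorm θ i y := by
  simp [trunorm, Finset.prod_mul_distrib]

theorem trunorm_ne_zero (θ : L ≃ₐ[K] L) (i : ℕ) {x : L} (hx : x ≠ 0) : trunorm θ i x ≠ 0 := by
  exact Finset.prod_ne_zero_iff.2 fun j _ => (map_ne_zero_iff _ (θ ^ j).injective).2 hx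

theorem trunorm_neg_one (θ : L ≃ₐ[K] L) (i : ℕ) : trunorm θ i (-1) = (-1) ^ i := by
  simp [trunorm]

theorem trunorm_apply (θ : L ≃ₐ[K] L) {n : ℕ} (hθ : θ ^ n = 1) (x : L) :
    trunorm θ n (θ x) = trunorm θ n x := by
  have h1 : trunorm θ n (θ x) = ∏ j ∈ Finset.range n, (θ ^ (j + 1)) x := by
    simp [trunorm, pow_succ]
  rw [h1]
  rcases n with _ | m
  · simp [trunorm]
  · rw [Finset.prod_range_succ, hθ, trunorm, Finset.prod_range_succ']
    simp

theorem trunorm_pow_apply (θ : L ≃ₐ[K] L) {n : ℕ} (hθ : θ ^ n = 1) (h : ℕ) (x : L) :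
    trunorm θ n ((θ ^ h) x) = trunorm θ n x := by
  induction h with
  | zero => simp
  | succ h ih =>
    rw [pow_succ', AlgEquiv.mul_apply, trunorm_apply θ hθ, ih]

/-- The value `∑_{i ≤ d} f_i D_α^i` of the skew polynomial `∑_{i ≤ d} f_i x^i` at the operator
`D_α : β ↦ α θ(β)`, written with `D_α^i(β) = N_i(α) θ^i(β)`. -/
def skewEval (θ : L ≃ₐ[K] L) (a : L) (d : ℕ) (f : ℕ → L) : L →ₗ[K] L :=
  ∑ i ∈ Finset.range (d + 1), (f i * trunorm θ i a) • (θ ^ i).toLinearMap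

theorem skewEval_apply (θ : L ≃ₐ[K] L) (a : L) (d : ℕ) (f : ℕ → L) (b : L) :
    skewEval θ a d f b = ∑ i ∈ Finset.range (d + 1), f i * (trunorm θ i a * (θ ^ i) b) := by
  simp [skewEval, mul_assoc]

/-- The value `D_α - γ` of the skew polynomial `x - γ` at `D_α`. -/
def skewLin (θ : L ≃ₐ[K] L) (a c : L) : L →ₗ[K] L :=
  a • θ.toLinearMap - c • LinearMap.id

theorem skewLin_apply (θ : L ≃ₐ[K] L) (a c b : L) : skewLin θ a c b = a * θ b - c * b := by
  simp [skewLin]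

/-- The coefficients of the right quotient of `∑_{i ≤ d+1} f_i x^i` by `x - c`, computed by Horner's
scheme from the top coefficient downwards. -/
theorem exists_div (θ : L ≃ₐ[K] L) (c : L) (d : ℕ) (f : ℕ → L) :
    ∃ g : ℕ → L, g (d + 1) = 0 ∧
      ∀ i ≤ d, g i = f (i + 1) + g (i + 1) * (θ ^ (i + 1)) c := by
  let q : ℕ → L := fun m =>
    Nat.rec 0 (fun m x => f (d + 1 - m) + x * (θ ^ (d + 1 - m)) c) m
  have hq : ∀ m, q (m + 1) = f (d + 1 - m) + q m * (θ ^ (d + 1 - m)) c := fun _ => rfl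
  refine ⟨fun i => q (d + 1 - i), ?_, ?_⟩
  · simp [q]
  · intro i hi
    have h1 : d + 1 - i = (d - i) + 1 := by omega
    have h2 : d + 1 - (i + 1) = d - i := by omega
    have h3 : d + 1 - (d - i) = i + 1 := by omega
    simp only [h1, h2]
    rw [hq, h3]

theorem skewEval_div (θ : L ≃ₐ[K] L) (c : L) (d : ℕ) (f g : ℕ → L) (hg0 : g (d + 1) = 0)
    (hg : ∀ i ≤ d, g i = f (i + 1) + g (i + 1) * (θ ^ (i + 1)) c) (a b : L) :
    skewEval θ a (d + 1) f b
      = skewEval θ a d g (skewLin θ a c b) + (f 0 + g 0 * c) * b := by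
  have hE : ∀ i, trunorm θ i a * (θ ^ i) (skewLin θ a c b)
      = trunorm θ (i + 1) a * (θ ^ (i + 1)) b - (θ ^ i) c * (trunorm θ i a * (θ ^ i) b) := by
    intro i
    have h1 : trunorm θ (i + 1) a = trunorm θ i a * (θ ^ i) a := by
      simp [trunorm, Finset.prod_range_succ]
    have h2 : (θ ^ (i + 1)) b = (θ ^ i) (θ b) := by rw [pow_succ, AlgEquiv.mul_apply]
    rw [skewLin_apply, map_sub, map_mul, map_mul, h1, h2]
    ring
  rw [skewEval_apply, skewEval_apply]
  simp only [hE]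
  generalize hu : (fun i => trunorm θ i a * (θ ^ i) b) = u
  have hu' : ∀ i, trunorm θ i a * (θ ^ i) b = u i := fun i => by rw [← hu]
  simp only [hu']
  have hu0 : u 0 = b := by rw [← hu]; simp [trunorm]
  have h3 : ∑ i ∈ Finset.range (d + 1), f (i + 1) * u (i + 1)
      = ∑ i ∈ Finset.range (d + 1), g i * u (i + 1)
        - ∑ i ∈ Finset.range (d + 1), g (i + 1) * (θ ^ (i + 1)) c * u (i + 1) := by
    rw [← Finset.sum_sub_distrib]
    refine Finset.sum_congr rfl fun i hi => ?_
    rw [hg i (by simpa [Nat.lt_succ_iff] using hi)]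
    ring
  have h4 : ∑ i ∈ Finset.range (d + 1), g (i + 1) * (θ ^ (i + 1)) c * u (i + 1) + g 0 * c * u 0
      = ∑ i ∈ Finset.range (d + 1), g i * (θ ^ i) c * u i := by
    have e1 := Finset.sum_range_succ' (fun i => g i * (θ ^ i) c * u i) (d + 1)
    rw [Finset.sum_range_succ, hg0] at e1
    simpa using e1.symm
  have h5 : ∑ i ∈ Finset.range (d + 1), g i * (u (i + 1) - (θ ^ i) c * u i)
      = ∑ i ∈ Finset.range (d + 1), g i * u (i + 1)
        - ∑ i ∈ Finset.range (d + 1), g i * (θ ^ i) c * u i := by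
    rw [← Finset.sum_sub_distrib]
    exact Finset.sum_congr rfl fun i _ => by ring
  rw [Finset.sum_range_succ', h3, h5, ← h4, hu0]
  ring

theorem finrank_ker_comp_le [FiniteDimensional K L] (A B : L →ₗ[K] L) :
    Module.finrank K (LinearMap.ker (A ∘ₗ B))
      ≤ Module.finrank K (LinearMap.ker A) + Module.finrank K (LinearMap.ker B) := by
  let T : LinearMap.ker (A ∘ₗ B) →ₗ[K] LinearMap.ker A :=
    B.restrict fun x hx => by simpa using hx
  have h1 := LinearMap.finrank_range_add_finrank_ker T
  have h2 : Module.finrank K (LinearMap.range T) ≤ Module.finrank K (LinearMap.ker A) :=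
    Submodule.finrank_le _
  have h3 : Module.finrank K (LinearMap.ker T) ≤ Module.finrank K (LinearMap.ker B) := by
    let S : LinearMap.ker T →ₗ[K] LinearMap.ker B :=
      { toFun := fun x => ⟨x.1.1, by
          have := x.2
          rw [LinearMap.mem_ker] at this ⊢
          exact congrArg Subtype.val this⟩
        map_add' := fun _ _ => rfl
        map_smul' := fun _ _ => rfl }
    refine LinearMap.finrank_le_finrank_of_injective (f := S) fun x y hxy => ?_
    exact Subtype.ext (Subtype.ext (congrArg (fun z : LinearMap.ker B => (z : L)) hxy))
  omega

theorem finrank_ker_skewLin_le_one [IsGalois K L] [FiniteDimensional K L] (θ : L ≃ₐ[K] L)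
    (hgen : ∀ σ : L ≃ₐ[K] L, σ ∈ Subgroup.zpowers θ) {a b c : L} (ha : a ≠ 0) (hb : b ≠ 0)
    (hc : a * θ b = c * b) :
    Module.finrank K (LinearMap.ker (skewLin θ a c)) ≤ 1 := by
  have hsub : LinearMap.ker (skewLin θ a c) ≤ Submodule.span K {b} := by
    intro x hx
    rw [LinearMap.mem_ker, skewLin_apply, sub_eq_zero] at hx
    have hθb : θ b ≠ 0 := by simpa using hb
    -- `x / b` is fixed by the generator `θ`, hence lies in `K`.
    have hfix : θ (x / b) = x / b := by
      rw [map_div₀, div_eq_div_iff hθb hb]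
      apply mul_left_cancel₀ ha
      linear_combination b * hx - x * hc
    have hall : ∀ σ : L ≃ₐ[K] L, σ (x / b) = x / b := by
      intro σ
      have hle : Subgroup.zpowers θ ≤ MulAction.stabilizer (L ≃ₐ[K] L) (x / b) := by
        rw [Subgroup.zpowers_le]
        exact hfix
      exact hle (hgen σ)
    obtain ⟨r, hr⟩ := (IsGalois.mem_range_algebraMap_iff_fixed (F := K) (x / b)).2 hall
    rw [Submodule.mem_span_singleton]
    refine ⟨r, ?_⟩
    rw [Algebra.smul_def, hr, div_mul_cancel₀ _ hb]
  exact (Submodule.finrank_mono hsub).trans (finrank_span_singleton (K := K) hb).le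

theorem ker_skewLin_eq_bot (θ : L ≃ₐ[K] L) {n : ℕ} (hθ : θ ^ n = 1) {a c : L}
    (hne : trunorm θ n a ≠ trunorm θ n c) :
    LinearMap.ker (skewLin θ a c) = ⊥ := by
  rw [LinearMap.ker_eq_bot']
  intro x hx
  rw [skewLin_apply, sub_eq_zero] at hx
  by_contra hx0
  apply hne
  have h1 := congrArg (trunorm θ n) hx
  rw [trunorm_mul, trunorm_mul, trunorm_apply θ hθ] at h1
  exact mul_right_cancel₀ (trunorm_ne_zero θ n hx0) h1

/-- A nonzero skew polynomial of degree at most `d` has total kernel dimension at most `d` on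
conjugacy classes with distinct norms; in case of equality it splits into linear factors whose
constants are conjugate to the `α j`, which determines the norm of its constant coefficient. -/
theorem sum_finrank_ker_le [IsGalois K L] [FiniteDimensional K L] (θ : L ≃ₐ[K] L)
    (hgen : ∀ σ : L ≃ₐ[K] L, σ ∈ Subgroup.zpowers θ) {n ℓ : ℕ} (hθ : θ ^ n = 1)
    (α : Fin ℓ → L) (hα0 : ∀ j, α j ≠ 0)
    (hdist : Function.Injective fun j => trunorm θ n (α j)) (d : ℕ) :
    ∀ f : ℕ → L, (∃ i ≤ d, f i ≠ 0) →
      ∑ j, Module.finrank K (LinearMap.ker (skewEval θ (α j) d f)) ≤ d ∧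
      (∑ j, Module.finrank K (LinearMap.ker (skewEval θ (α j) d f)) = d →
        f d ≠ 0 ∧ ∃ e : Fin ℓ → ℤ, trunorm θ n (f 0)
          = trunorm θ n (f d) * (-1) ^ (d * n) * ∏ j, trunorm θ n (α j) ^ e j) := by
  induction d with
  | zero =>
    rintro f ⟨i, hi, hf⟩
    obtain rfl : i = 0 := by omega
    have hker : ∀ j, LinearMap.ker (skewEval θ (α j) 0 f) = ⊥ := by
      intro j
      rw [LinearMap.ker_eq_bot']
      intro x hx
      simpa [skewEval_apply, trunorm, hf] using hx
    have hS : ∑ j, Module.finrank K (LinearMap.ker (skewEval θ (α j) 0 f)) = 0 :=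
      Finset.sum_eq_zero fun j _ => by rw [hker j, finrank_bot]
    refine ⟨hS.le, fun _ => ⟨hf, 0, by simp⟩⟩
  | succ d ih =>
    rintro f ⟨i, hi, hfi⟩
    by_cases htop : f (d + 1) = 0
    · have heq : ∀ j, skewEval θ (α j) (d + 1) f = skewEval θ (α j) d f := by
        intro j
        rw [skewEval, Finset.sum_range_succ, htop]
        simp [skewEval]
      have hid : i ≤ d := by
        by_contra hcon
        exact hfi ((show i = d + 1 by omega) ▸ htop)
      have := (ih f ⟨i, hid, hfi⟩).1
      have hS : ∑ j, Module.finrank K (LinearMap.ker (skewEval θ (α j) (d + 1) f))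
          = ∑ j, Module.finrank K (LinearMap.ker (skewEval θ (α j) d f)) :=
        Finset.sum_congr rfl fun j _ => by rw [heq j]
      exact ⟨by omega, fun h => by omega⟩
    · by_cases hall : ∀ j, LinearMap.ker (skewEval θ (α j) (d + 1) f) = ⊥
      · have hS : ∑ j, Module.finrank K (LinearMap.ker (skewEval θ (α j) (d + 1) f)) = 0 :=
          Finset.sum_eq_zero fun j _ => by rw [hall j, finrank_bot]
        exact ⟨by omega, fun h => by omega⟩
      · push Not at hall
        obtain ⟨j₀, hj₀⟩ := hall
        obtain ⟨b, hbk, hb⟩ := Submodule.exists_mem_ne_zero_of_ne_bot hj₀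
        set c : L := α j₀ * θ b / b with hcdef
        have hc : α j₀ * θ b = c * b := by rw [hcdef, div_mul_cancel₀ _ hb]
        have hNc : trunorm θ n c = trunorm θ n (α j₀) := by
          have h1 := congrArg (trunorm θ n) hc
          rw [trunorm_mul, trunorm_mul, trunorm_apply θ hθ] at h1
          exact (mul_right_cancel₀ (trunorm_ne_zero θ n hb) h1).symm
        obtain ⟨g, hg0, hg⟩ := exists_div θ c d f
        have hdiv := skewEval_div θ c d f g hg0 hg
        -- Evaluating at the root `b` kills the quotient term, so the remainder vanishes.
        have hrem : f 0 + g 0 * c = 0 := by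
          have h1 := hdiv (α j₀) b
          rw [LinearMap.mem_ker] at hbk
          rw [hbk, skewLin_apply, hc, sub_self, map_zero, zero_add] at h1
          exact (mul_eq_zero.1 h1.symm).resolve_right hb
        have hcomp : ∀ j, skewEval θ (α j) (d + 1) f
            = skewEval θ (α j) d g ∘ₗ skewLin θ (α j) c := by
          intro j
          ext x
          rw [hdiv, hrem]
          simp
        have hgd : g d = f (d + 1) := by
          rw [hg d le_rfl, hg0]
          simp
        obtain ⟨ih1, ih2⟩ := ih g ⟨d, le_rfl, hgd ▸ htop⟩
        have hlin : ∀ j, Module.finrank K (LinearMap.ker (skewLin θ (α j) c))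
            ≤ if j = j₀ then 1 else 0 := by
          intro j
          split_ifs with hj
          · subst hj
            exact finrank_ker_skewLin_le_one θ hgen (hα0 _) hb hc
          · rw [ker_skewLin_eq_bot θ hθ fun h => hj (hdist (h.trans hNc))]
            simp
        have hsum : ∑ j, Module.finrank K (LinearMap.ker (skewEval θ (α j) (d + 1) f))
            ≤ ∑ j, Module.finrank K (LinearMap.ker (skewEval θ (α j) d g)) + 1 := by
          calc _ ≤ ∑ j, (Module.finrank K (LinearMap.ker (skewEval θ (α j) d g))
                + if j = j₀ then 1 else 0) := by
                refine Finset.sum_le_sum fun j _ => ?_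
                rw [hcomp j]
                exact (finrank_ker_comp_le _ _).trans (Nat.add_le_add_left (hlin j) _)
            _ = _ := by rw [Finset.sum_add_distrib]; simp
        refine ⟨by omega, fun hEq => ⟨htop, ?_⟩⟩
        obtain ⟨-, e, he⟩ := ih2 (by omega)
        refine ⟨e + Pi.single j₀ 1, ?_⟩
        have hf0 : f 0 = -1 * c * g 0 := by linear_combination hrem
        have hprod : ∏ j, trunorm θ n (α j) ^ (e + Pi.single j₀ 1 : Fin ℓ → ℤ) j
            = (∏ j, trunorm θ n (α j) ^ e j) * trunorm θ n (α j₀) := by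
          have h1 : ∀ j, trunorm θ n (α j) ^ (e + Pi.single j₀ 1 : Fin ℓ → ℤ) j
              = trunorm θ n (α j) ^ e j * if j = j₀ then trunorm θ n (α j₀) else 1 := by
            intro j
            rw [Pi.add_apply, zpow_add₀ (trunorm_ne_zero θ n (hα0 j))]
            by_cases hj : j = j₀
            · subst hj; simp
            · simp [hj]
          simp only [h1]
          rw [Finset.prod_mul_distrib]
          simp
        rw [hf0, trunorm_mul, trunorm_mul, trunorm_neg_one, hNc, he, hprod, hgd]
        ring

/-- The coefficients of the twisted skew polynomial of degree at most `k` attached to `f`. -/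
def twCoeff (θ : L ≃ₐ[K] L) (k h : ℕ) (η : L) (f : ℕ → L) (i : ℕ) : L :=
  if i < k then f i else η * (θ ^ h) (f 0)

theorem PhiTw_eq_skewEval (ℓ : ℕ) (θ : L ≃ₐ[K] L) (α : Fin ℓ → L) (k h : ℕ) (η : L) (f : ℕ → L)
    (j : Fin ℓ) : PhiTw ℓ θ α k h η f j = skewEval θ (α j) k (twCoeff θ k h η f) := by
  rw [PhiTw, skewEval, Finset.sum_range_succ]
  congr 1
  · refine Finset.sum_congr rfl fun i hi => ?_
    rw [twCoeff, if_pos (Finset.mem_range.1 hi)]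
  · simp [twCoeff]

/-- The encoding map as a `K`-linear map on the honest message space `L^k`, a message being extended
by zero to a sequence. -/
def encodeTw (ℓ : ℕ) (θ : L ≃ₐ[K] L) (α : Fin ℓ → L) (k h : ℕ) (η : L) :
    (Fin k → L) →ₗ[K] (Fin ℓ → L →ₗ[K] L) where
  toFun v := PhiTw ℓ θ α k h η fun i => if hi : i < k then v ⟨i, hi⟩ else 0
  map_add' v w := by
    ext j x
    by_cases hk : 0 < k
    · simp only [PhiTw, Pi.add_apply, LinearMap.add_apply, LinearMap.sum_apply,
        LinearMap.smul_apply, AlgEquiv.toLinearMap_apply, smul_eq_mul, dif_pos hk, map_add]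
      have : ∀ i, (if hi : i < k then v ⟨i, hi⟩ + w ⟨i, hi⟩ else 0)
          = (if hi : i < k then v ⟨i, hi⟩ else 0) + (if hi : i < k then w ⟨i, hi⟩ else 0) := by
        intro i
        split_ifs <;> simp
      simp only [this, add_mul, mul_add, Finset.sum_add_distrib]
      ring
    · obtain rfl : k = 0 := by omega
      simp [PhiTw]
  map_smul' r v := by
    ext j x
    by_cases hk : 0 < k
    · simp only [PhiTw, Pi.smul_apply, LinearMap.add_apply, LinearMap.sum_apply,
        LinearMap.smul_apply, AlgEquiv.toLinearMap_apply, smul_eq_mul, dif_pos hk, map_smul,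
        RingHom.id_apply]
      have : ∀ i, (if hi : i < k then r • v ⟨i, hi⟩ else 0)
          = r • (if hi : i < k then v ⟨i, hi⟩ else 0) := by
        intro i
        split_ifs <;> simp
      simp only [this, smul_add, Finset.smul_sum, smul_mul_assoc, mul_smul_comm]
    · obtain rfl : k = 0 := by omega
      simp [PhiTw]

theorem range_PhiTw (ℓ : ℕ) (θ : L ≃ₐ[K] L) (α : Fin ℓ → L) {k : ℕ} (hk : 1 ≤ k) (h : ℕ) (η : L) :
    Set.range (PhiTw ℓ θ α k h η) = LinearMap.range (encodeTw ℓ θ α k h η) := by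
  ext T
  constructor
  · rintro ⟨f, rfl⟩
    refine ⟨fun i => f i, ?_⟩
    funext j
    change PhiTw ℓ θ α k h η _ j = _
    rw [PhiTw, PhiTw]
    congr 1
    · refine Finset.sum_congr rfl fun i hi => ?_
      rw [dif_pos (Finset.mem_range.1 hi)]
    · rw [dif_pos (show 0 < k by omega)]
  · rintro ⟨v, rfl⟩
    exact ⟨_, rfl⟩

theorem stmt_14 (n ℓ : ℕ) [IsGalois K L] [FiniteDimensional K L]
    (hn : Module.finrank K L = n) (θ : L ≃ₐ[K] L)
    (hgen : ∀ σ : L ≃ₐ[K] L, σ ∈ Subgroup.zpowers θ)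
    (hl : 1 ≤ ℓ) (α : Fin ℓ → L) (hα0 : ∀ j, α j ≠ 0)
    (hdist : Function.Injective fun j => trunorm θ n (α j))
    (k : ℕ) (hk1 : 1 ≤ k) (hk : k ≤ ℓ * n) (h : ℕ) (η : L)
    -- `(-1)^{kn}·N_{L/K}(η)` is not in the subgroup generated by the `N_{L/K}(α_j)`:
    (hη : ∀ e : Fin ℓ → ℤ,
      (-1 : L) ^ (k * n) * trunorm θ n η ≠ ∏ j : Fin ℓ, trunorm θ n (α j) ^ e j) :
    (∀ f : ℕ → L, (∃ i, i < k ∧ f i ≠ 0) →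
        ∑ j : Fin ℓ, Module.finrank K ↥(LinearMap.ker (PhiTw ℓ θ α k h η f j)) ≤ k - 1 ∧
        ℓ * n - k + 1
          ≤ ∑ j : Fin ℓ,
              (n - Module.finrank K ↥(LinearMap.ker (PhiTw ℓ θ α k h η f j)))) ∧
      Module.finrank K ↥(Submodule.span K (Set.range (PhiTw ℓ θ α k h η))) = n * k := by
  have hθ : θ ^ n = 1 := by
    rw [← hn, ← IsGalois.card_aut_eq_finrank K L]
    exact pow_card_eq_one'
  have hn0 : 0 < n := hn ▸ Module.finrank_pos
  have main : ∀ f : ℕ → L, (∃ i, i < k ∧ f i ≠ 0) →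
      ∑ j : Fin ℓ, Module.finrank K ↥(LinearMap.ker (PhiTw ℓ θ α k h η f j)) ≤ k - 1 := by
    rintro f ⟨i, hi, hfi⟩
    obtain ⟨h1, h2⟩ := sum_finrank_ker_le θ hgen hθ α hα0 hdist k (twCoeff θ k h η f)
      ⟨i, hi.le, by rwa [twCoeff, if_pos hi]⟩
    have hS : ∑ j : Fin ℓ, Module.finrank K ↥(LinearMap.ker (PhiTw ℓ θ α k h η f j))
        = ∑ j, Module.finrank K (LinearMap.ker (skewEval θ (α j) k (twCoeff θ k h η f))) :=
      Finset.sum_congr rfl fun j _ => by rw [PhiTw_eq_skewEval]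
    by_contra hcon
    obtain ⟨h3, e, he⟩ := h2 (by omega)
    have hc0 : twCoeff θ k h η f 0 = f 0 := by simp [twCoeff, show 0 < k by omega]
    have hck : twCoeff θ k h η f k = η * (θ ^ h) (f 0) := by simp [twCoeff]
    rw [hck] at h3 he
    have hf0 : f 0 ≠ 0 := by
      intro h0
      simp [h0] at h3
    rw [hc0, trunorm_mul, trunorm_pow_apply θ hθ] at he
    have hN := trunorm_ne_zero θ n hf0
    have he' : ((-1) ^ (k * n) * trunorm θ n η) * ∏ j, trunorm θ n (α j) ^ e j = 1 := by
      apply mul_left_cancel₀ hN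
      linear_combination -he
    apply hη (-e)
    rw [eq_inv_of_mul_eq_one_left he', ← Finset.prod_inv_distrib]
    simp
  refine ⟨fun f hf => ⟨main f hf, ?_⟩, ?_⟩
  · have h1 := main f hf
    have h2 : ∑ j : Fin ℓ, (n - Module.finrank K ↥(LinearMap.ker (PhiTw ℓ θ α k h η f j)))
        + ∑ j : Fin ℓ, Module.finrank K ↥(LinearMap.ker (PhiTw ℓ θ α k h η f j)) = ℓ * n := by
      rw [← Finset.sum_add_distrib]
      have h3 : ∀ j : Fin ℓ, n - Module.finrank K ↥(LinearMap.ker (PhiTw ℓ θ α k h η f j))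
          + Module.finrank K ↥(LinearMap.ker (PhiTw ℓ θ α k h η f j)) = n := fun j =>
        Nat.sub_add_cancel (hn ▸ Submodule.finrank_le _)
      simp [h3]
    omega
  · rw [range_PhiTw ℓ θ α hk1 h η, Submodule.span_eq]
    have hinj : Function.Injective (encodeTw ℓ θ α k h η) := by
      rw [← LinearMap.ker_eq_bot, LinearMap.ker_eq_bot']
      intro v hv
      by_contra hv0
      obtain ⟨i, hi⟩ := Function.ne_iff.1 hv0
      have h1 := main (fun i => if hi : i < k then v ⟨i, hi⟩ else 0)
        ⟨i, i.2, by simpa using hi⟩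
      -- A codeword equal to zero would have total kernel dimension `ℓ n > k - 1`.
      change PhiTw ℓ θ α k h η _ = 0 at hv
      rw [hv] at h1
      have h2 : ∑ j : Fin ℓ, Module.finrank K
          ↥(LinearMap.ker ((0 : Fin ℓ → L →ₗ[K] L) j)) = ℓ * n := by
        have h3 : ∀ j : Fin ℓ, Module.finrank K
            ↥(LinearMap.ker ((0 : Fin ℓ → L →ₗ[K] L) j)) = n := fun j => by
          rw [Pi.zero_apply, LinearMap.ker_zero, finrank_top, hn]
        rw [Finset.sum_congr rfl fun j _ => h3 j]
        simp
      have h4 : 0 < ℓ * n := Nat.mul_pos hl hn0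
      omega
    rw [LinearMap.finrank_range_of_inj hinj, Module.finrank_pi_fintype]
    simp [hn, mul_comm]
end
end

section
/- Let ℓ ≥ 1, 1 ≤ k ≤ ℓn − 1, h ∈ ℕ and η ∈ L. Let C := {f ∈ L^{ℓn} : f_k = η·θ^h(f_0) and f_i = 0 for all k < i ≤ ℓn−1} (with f_0,…,f_{k−1} arbitrary). Then the orthogonal complement of C with respect to the K-bilinear form (f,g) ↦ Tr_{L/K}(Σ_{i=0}^{ℓn−1} f_i·g_i) is C^⊥ = {g ∈ L^{ℓn} : g_0 = −θ^{n−h}(η·g_k) and g_i = 0 for all 1 ≤ i ≤ k−1} (with g_k,…,g_{ℓn−1} arbitrary). In the skew-polynomial language, this says L_k^θ(η,h)^⊥ = L_{ℓn−k}^θ(−θ^{n−h}(η), n−h)·X^k. -/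
/-!
For `f` in the code, only `f_0, …, f_k` can be nonzero and `f_k = η θ^h(f_0)`. Since the trace is
invariant under `θ` and `θ^m` is inverse to `θ^h` for `m = n - h` modulo `n`, the pairing
contributed by the positions `0` and `k` is `Tr (f_0 (g_0 + θ^m(η g_k)))` (`TrL_pair`). The
coordinates `f_0, …, f_{k-1}` are free, so nondegeneracy of the trace form (`TrL_nondegenerate`,
which uses separability of `L/K`) forces `g_0 = -θ^m(η g_k)` and `g_1 = … = g_{k-1} = 0`;
conversely these equations make the pairing vanish.
-/

noncomputable section

open Finset

variable {K L : Type*} [Field K] [Field L] [Algebra K L]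

/-- The trace `Tr_{L/K}(x) = ∑_{i=0}^{n-1} θ^i(x)` (as an element of `L`). -/
def TrL (θ : L ≃ₐ[K] L) (n : ℕ) (x : L) : L :=
  ∑ i ∈ Finset.range n, (θ ^ i) x

theorem orderOf_generator [IsGalois K L] [FiniteDimensional K L] {n : ℕ}
    (hn : Module.finrank K L = n) (θ : L ≃ₐ[K] L)
    (hgen : ∀ σ : L ≃ₐ[K] L, σ ∈ Subgroup.zpowers θ) : orderOf θ = n := by
  rw [orderOf_eq_card_of_forall_mem_zpowers hgen, IsGalois.card_aut_eq_finrank, hn]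

/-- `TrL` is the field trace: the powers `θ^0, …, θ^(n-1)` run once through the Galois group. -/
theorem TrL_eq_trace [IsGalois K L] [FiniteDimensional K L] {n : ℕ}
    (hn : Module.finrank K L = n) (θ : L ≃ₐ[K] L)
    (hgen : ∀ σ : L ≃ₐ[K] L, σ ∈ Subgroup.zpowers θ) (x : L) :
    TrL θ n x = algebraMap K L (Algebra.trace K L x) := by
  classical
  have hord := orderOf_generator hn θ hgen
  rw [trace_eq_sum_automorphisms, ← IsCyclic.image_range_orderOf hgen, hord, TrL,
    Finset.sum_image]
  intro i hi j hj hij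
  have hi' : i < n := by simpa using hi
  have hj' : j < n := by simpa using hj
  exact pow_injOn_Iio_orderOf (by simpa [hord] using hi') (by simpa [hord] using hj') hij

theorem TrL_nondegenerate [IsGalois K L] [FiniteDimensional K L] {n : ℕ}
    (hn : Module.finrank K L = n) (θ : L ≃ₐ[K] L)
    (hgen : ∀ σ : L ≃ₐ[K] L, σ ∈ Subgroup.zpowers θ) (a : L)
    (ha : ∀ x, TrL θ n (x * a) = 0) : a = 0 := by
  refine (traceForm_nondegenerate K L).2 a fun x => ?_
  have := ha x
  rw [TrL_eq_trace hn θ hgen] at this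
  simpa [Algebra.traceForm_apply] using this

/-- The joint contribution of the positions `0` and `k` to the pairing, with `θ` moved from
`x = f_0` onto `b = g_k` by invariance of the trace. -/
theorem TrL_pair [IsGalois K L] [FiniteDimensional K L] {n : ℕ}
    (hn : Module.finrank K L = n) (θ : L ≃ₐ[K] L)
    (hgen : ∀ σ : L ≃ₐ[K] L, σ ∈ Subgroup.zpowers θ) (hn1 : 1 ≤ n) (h : ℕ) (η x a b : L) :
    TrL θ n (x * a + η * (θ ^ h) x * b) =
      TrL θ n (x * (a + (θ ^ ((n - h % n) % n)) (η * b))) := by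
  have hord := orderOf_generator hn θ hgen
  have hpow : θ ^ ((n - h % n) % n) * θ ^ h = 1 := by
    rw [← pow_add, ← orderOf_dvd_iff_pow_eq_one, hord, Nat.dvd_iff_mod_eq_zero, Nat.mod_add_mod]
    have h1 := Nat.mod_lt h hn1
    have h2 : n - h % n + h = n * (1 + h / n) := by
      have := Nat.mod_add_div h n
      rw [mul_add]
      omega
    rw [h2, Nat.mul_mod_right]
  have hx : (θ ^ ((n - h % n) % n)) ((θ ^ h) x) = x := by
    rw [← AlgEquiv.mul_apply, hpow, AlgEquiv.one_apply]
  have hm : x * (θ ^ ((n - h % n) % n)) (η * b) =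
      (θ ^ ((n - h % n) % n)) (η * (θ ^ h) x * b) := by
    rw [mul_right_comm, map_mul _ (η * b), hx, mul_comm]
  simp only [TrL_eq_trace hn θ hgen, mul_add, map_add, hm, Algebra.trace_eq_of_algEquiv]

theorem stmt_15 (n ℓ : ℕ) [IsGalois K L] [FiniteDimensional K L]
    (hn : Module.finrank K L = n) (θ : L ≃ₐ[K] L)
    (hgen : ∀ σ : L ≃ₐ[K] L, σ ∈ Subgroup.zpowers θ)
    (hl : 1 ≤ ℓ) (hn1 : 1 ≤ n)
    (k h : ℕ) (hk1 : 1 ≤ k) (hk : k < ℓ * n) (η : L) :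
    {g : Fin (ℓ * n) → L |
        ∀ f : Fin (ℓ * n) → L,
          (f ⟨k, hk⟩ = η * (θ ^ h) (f ⟨0, by omega⟩) ∧
              ∀ i : Fin (ℓ * n), k < (i : ℕ) → f i = 0) →
            TrL θ n (∑ i : Fin (ℓ * n), f i * g i) = 0}
      = {g : Fin (ℓ * n) → L |
          g ⟨0, by omega⟩ = -((θ ^ ((n - h % n) % n)) (η * g ⟨k, hk⟩)) ∧
            ∀ i : Fin (ℓ * n), 1 ≤ (i : ℕ) → (i : ℕ) ≤ k - 1 → g i = 0} := by
  have h0 : 0 < ℓ * n := by omega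
  have h0k : (⟨0, h0⟩ : Fin (ℓ * n)) ≠ ⟨k, hk⟩ := by
    simp only [ne_eq, Fin.mk.injEq]
    omega
  ext g
  simp only [Set.mem_ofPred_eq]
  constructor
  · intro H
    refine ⟨eq_neg_of_add_eq_zero_left (TrL_nondegenerate hn θ hgen _ fun x => ?_), ?_⟩
    · rw [← TrL_pair hn θ hgen hn1]
      -- The codeword determined by `f_0 = x` and `f_1 = … = f_{k-1} = 0`.
      have := H (Pi.single ⟨0, h0⟩ x + Pi.single ⟨k, hk⟩ (η * (θ ^ h) x)) ⟨?_, ?_⟩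
      · simpa [add_mul, Finset.sum_add_distrib, Pi.single_apply] using this
      · simp [h0k, h0k.symm]
      · intro i hi
        have hi0 : i ≠ ⟨0, h0⟩ := by rintro rfl; simp at hi
        have hik : i ≠ ⟨k, hk⟩ := by rintro rfl; simp at hi
        simp [hi0, hik]
    · intro i hi1 hik
      refine TrL_nondegenerate hn θ hgen _ fun x => ?_
      have hi0 : (⟨0, h0⟩ : Fin (ℓ * n)) ≠ i := by rintro rfl; simp at hi1
      have hik' : (⟨k, hk⟩ : Fin (ℓ * n)) ≠ i := by rintro rfl; simp at hik; omega
      have := H (Pi.single i x) ⟨by simp [hi0, hik'], ?_⟩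
      · simpa [Pi.single_apply] using this
      · intro j hj
        have hji : j ≠ i := by rintro rfl; omega
        simp [hji]
  · rintro ⟨hg0, hg⟩ f ⟨hfk, hf⟩
    rw [Fintype.sum_eq_add _ _ h0k, hfk, TrL_pair hn θ hgen hn1, hg0]
    · simp [TrL]
    · rintro i ⟨hi0, hik⟩
      have hi0' : (i : ℕ) ≠ 0 := fun e => hi0 (Fin.ext e)
      have hik' : (i : ℕ) ≠ k := fun e => hik (Fin.ext e)
      rcases lt_or_gt_of_ne hik' with hlt | hgt
      · rw [hg i (by omega) (by omega), mul_zero]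
      · rw [hf i hgt, zero_mul]
end
end

section
/- Let q ≥ 3 be a prime power, K a finite field with q elements, and L a finite field extension of K of degree n ≥ 1 (so L/K is cyclic Galois). Let r be the smallest prime divisor of q − 1, let k ≥ 1, and let 1 ≤ ℓ ≤ (q−1)/r. Then there exist α_1,…,α_ℓ ∈ L \ {0} whose norms N_{L/K}(α_j) are pairwise distinct, and η ∈ L \ {0}, such that (−1)^{k·n}·N_{L/K}(η) does not lie in the multiplicative subgroup of K \ {0} generated by {N_{L/K}(α_1),…,N_{L/K}(α_ℓ)}; i.e., a nontrivial twisted linearized Reed–Solomon code with ℓ blocks exists. -/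
/-!
Let `g` generate the cyclic group `Kˣ` of order `q - 1`, and let `r` be the smallest prime factor
of `q - 1`. The power `g ^ r` has order `(q - 1) / r`, so `1, g ^ r, …, (g ^ r) ^ (ℓ - 1)` are
distinct. As the norm of an extension of finite fields is surjective, these are the norms of some
`α j`, and `(-1) ^ (k * n) * g` is the norm of some `η`. Then `(-1) ^ (k * n) * N(η) = g`, while
the norms of the `α j` all lie in the proper subgroup generated by `g ^ r`, which cannot
contain the generator `g`.
-/

noncomputable section

theorem stmt_16 (q n : ℕ) (K L : Type*) [Field K] [Fintype K] [Field L]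
    [Algebra K L] [FiniteDimensional K L]
    (hq : Fintype.card K = q) (hq3 : 3 ≤ q)
    (hn : Module.finrank K L = n) (hn1 : 1 ≤ n)
    (k : ℕ) (hk : 1 ≤ k)
    (ℓ : ℕ) (hl1 : 1 ≤ ℓ) (hl : ℓ ≤ (q - 1) / (q - 1).minFac) :
    ∃ (α : Fin ℓ → L) (η : L),
      (∀ j, α j ≠ 0) ∧
      Function.Injective (fun j => Algebra.norm K (α j)) ∧
      η ≠ 0 ∧
      -- `(-1)^{kn}·N_{L/K}(η)` is not in the subgroup generated by the `N_{L/K}(α_j)`: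
      ∀ e : Fin ℓ → ℤ,
        (-1 : K) ^ (k * n) * Algebra.norm K η
          ≠ ∏ j : Fin ℓ, Algebra.norm K (α j) ^ e j := by
  have : Finite L := Module.finite_of_finite K
  obtain ⟨g, hg⟩ := IsCyclic.exists_ofOrder_eq_natCard (α := Kˣ)
  have hg' : orderOf g = q - 1 := by
    rw [hg, Nat.card_units, Nat.card_eq_fintype_card, hq]
  have hr : (q - 1).minFac.Prime := Nat.minFac_prime (by omega)
  have hdvd : (q - 1).minFac ∣ q - 1 := Nat.minFac_dvd _
  set r := (q - 1).minFac
  have hh : orderOf (g ^ r) = (q - 1) / r := by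
    rw [orderOf_pow_of_dvd hr.ne_zero (hg' ▸ hdvd), hg']
  have hsurj := FiniteField.unitsMap_norm_surjective K L
  choose a ha using fun j : Fin ℓ => hsurj ((g ^ r) ^ (j : ℕ))
  obtain ⟨b, hb⟩ := hsurj ((-1) ^ (k * n) * g)
  have ha' : ∀ j, Algebra.norm K (a j : L) = (((g ^ r) ^ (j : ℕ) : Kˣ) : K) := fun j => by
    rw [← ha j]; rfl
  have hb' : Algebra.norm K (b : L) = (((-1) ^ (k * n) * g : Kˣ) : K) := by
    rw [← hb]; rfl
  refine ⟨fun j => a j, b, fun j => (a j).ne_zero, fun i j hij => ?_, b.ne_zero, fun e he => ?_⟩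
  · simp only [ha'] at hij
    exact Fin.ext (pow_injOn_Iio_orderOf (x := g ^ r) (Set.mem_Iio.2 (by omega))
      (Set.mem_Iio.2 (by omega)) (Units.ext hij))
  · have hprod : g = ∏ j : Fin ℓ, ((g ^ r) ^ (j : ℕ)) ^ e j := by
      apply Units.ext
      simp only [ha', hb'] at he
      have hsq : (-1 : K) ^ (k * n) * (-1) ^ (k * n) = 1 := by
        rw [← mul_pow]; simp
      rw [Units.val_mul, ← mul_assoc, Units.val_pow_eq_pow_val, Units.val_neg, Units.val_one,
        hsq, one_mul] at he
      rw [he, Units.coe_prod]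
      simp only [Units.val_zpow_eq_zpow_val]
    have hmem : ∏ j : Fin ℓ, ((g ^ r) ^ (j : ℕ)) ^ e j ∈ Subgroup.zpowers (g ^ r) :=
      Subgroup.prod_mem _ fun j _ => zpow_mem (pow_mem (Subgroup.mem_zpowers _) _) _
    rw [← hprod] at hmem
    have hle := Nat.le_of_dvd (orderOf_pos _) (orderOf_dvd_of_mem_zpowers hmem)
    rw [hg', hh] at hle
    exact absurd (Nat.div_lt_self (by omega : 0 < q - 1) hr.one_lt) (by omega)
end
end

section
/- Let q be an odd prime power and let 𝔽 be a finite field with q² elements; let E := {x ∈ 𝔽 : x^q = x} be its subfield with q elements, and let γ ∈ 𝔽 \ {0} be a non-square in 𝔽. Let k ≥ 1, f_0, f_k ∈ E and f_1,…,f_{k−1} ∈ 𝔽, not all zero, and let F(X) := Σ_{i=0}^{k−1} f_i·X^i + γ·f_k·X^k ∈ 𝔽[X]. Then for every finite set Λ ⊆ {a² : a ∈ 𝔽 \ {0}} of nonzero squares, the number of λ ∈ Λ with F(λ) = 0 is at most k − 1. Consequently, for |Λ| = ℓ ≥ k, the evaluation code {(F(λ))_{λ∈Λ}} is an E-linear code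 of length ℓ, cardinality q^{2k}, and minimum Hamming distance ℓ − k + 1, i.e. an MDS code over 𝔽. -/
noncomputable section

open Finset

/-!
The root bound rests on two facts. Every element of the subfield `E = {x : x ^ q = x}` is a square
in `F`, because `x ^ ((q² - 1) / 2) = (x ^ (q - 1)) ^ ((q + 1) / 2)`. And a polynomial
`∑_{i<k} f_i X^i + γ f_k X^k` with `k` distinct roots `s ∈ S` equals `γ f_k ∏ (X - s)`. Comparing
constant terms gives `f_0 = γ f_k (-1)^k ∏ s`. If `f_k ≠ 0` and all `s` are nonzero squares, then
`f_0`, `f_k`, `-1` and `∏ s` are nonzero squares, so `γ` is a square, a contradiction; if `f_k = 0`,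
the polynomial vanishes identically (`coeffs_eq_zero`).

Since `E` is closed under subtraction, the evaluation map at `ℓ ≥ k` nonzero squares is then
injective on the coefficient vectors, of which there are `|E|² (q²)^(k-1) = q^(2k)`, because `E` has
`q` elements (`card_fixed`). The distance bound counts the zeros of a codeword.
-/

section

variable {F : Type*} [Field F] [Fintype F]

lemma isSquare_of_pow_eq {q : ℕ} (hqodd : Odd q) (hF : Fintype.card F = q ^ 2)
    {x : F} (hx : x ^ q = x) : IsSquare x := by
  by_cases h0 : x = 0
  · simp [h0]
  have hchar : ringChar F ≠ 2 := by
    rw [Ne, FiniteField.even_card_iff_char_two, hF, ← Nat.even_iff]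
    exact Nat.not_even_iff_odd.2 hqodd.pow
  rw [FiniteField.isSquare_iff hchar h0, hF]
  obtain ⟨m, rfl⟩ := hqodd
  have h1 : x ^ (2 * m) = 1 := by
    rw [pow_succ] at hx
    exact (mul_eq_right₀ h0).1 hx
  have h2 : (2 * m + 1) ^ 2 / 2 = 2 * m * (m + 1) := by
    have : (2 * m + 1) ^ 2 = 2 * (2 * m * (m + 1)) + 1 := by ring
    omega
  rw [h2, pow_mul, h1, one_pow]

/-- The nonzero elements of `E` form the kernel of `u ↦ u ^ (q - 1)` on the cyclic group `Fˣ`, of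
order `gcd (q² - 1) (q - 1) = q - 1`. -/
lemma card_fixed [DecidableEq F] {q : ℕ} (hq : 1 ≤ q) (hF : Fintype.card F = q ^ 2) :
    #{x : F | x ^ q = x} = q := by
  have hker : #{u : Fˣ | u ^ (q - 1) = 1} = q - 1 := by
    have h := IsCyclic.card_powMonoidHom_ker (G := Fˣ) (q - 1)
    rw [Nat.card_eq_fintype_card (α := Fˣ), Fintype.card_units, hF,
      Nat.gcd_eq_right (by simpa using Nat.sub_dvd_pow_sub_pow q 1 2)] at h
    rw [Nat.card_eq_fintype_card, Fintype.card_subtype] at h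
    simpa [MonoidHom.mem_ker] using h
  have hset : ({x : F | x ^ q = x} : Finset F)
      = insert 0 (({u : Fˣ | u ^ (q - 1) = 1} : Finset Fˣ).map ⟨Units.val, Units.val_injective⟩) := by
    ext x
    simp only [mem_filter, mem_univ, true_and, mem_insert, mem_map, Function.Embedding.coeFn_mk]
    obtain ⟨m, rfl⟩ := Nat.exists_eq_add_of_le' hq
    simp only [Nat.add_sub_cancel, pow_succ]
    constructor
    · intro h
      by_cases h0 : x = 0
      · exact Or.inl h0
      · exact Or.inr ⟨Units.mk0 x h0, Units.ext (by simpa using (mul_eq_right₀ h0).1 h), rfl⟩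
    · rintro (rfl | ⟨u, hu, rfl⟩)
      · simp
      · rw [← Units.val_pow_eq_pow_val, hu]; simp
  rw [hset, card_insert_of_notMem (by simp), card_map, hker]
  omega

lemma sub_pow_of_card {q : ℕ} (hpp : IsPrimePow q) (hF : Fintype.card F = q ^ 2) (x y : F) :
    (x - y) ^ q = x ^ q - y ^ q := by
  obtain ⟨p, m, hp, -, rfl⟩ := hpp
  have hp' : p.Prime := hp.nat_prime
  have := Fact.mk hp'
  have : CharP F p := charP_of_card_eq_prime_pow (f := m * 2)
    (by rw [hF, pow_mul])
  exact sub_pow_char_pow ..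

open Polynomial in
/-- A polynomial of the given shape vanishing on `k` distinct nonzero squares is zero. -/
lemma coeffs_eq_zero {q : ℕ} (hqodd : Odd q) (hF : Fintype.card F = q ^ 2)
    {γ : F} (hγ : ∀ a : F, γ ≠ a ^ 2) {k : ℕ} (hk : 1 ≤ k)
    (f : ℕ → F) (h0 : f 0 ^ q = f 0) (hfk : f k ^ q = f k)
    (S : Finset F) (hS : #S = k) (hsq : ∀ x ∈ S, ∃ a : F, a ≠ 0 ∧ x = a ^ 2)
    (hroot : ∀ x ∈ S, ∑ i ∈ Finset.range k, f i * x ^ i + γ * f k * x ^ k = 0) :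
    ∀ i, i ≤ k → f i = 0 := by
  set Q : F[X] := ∏ s ∈ S, (X - C s) with hQ
  set L : F[X] := ∑ i ∈ Finset.range k, C (f i) * X ^ i with hL
  have hQm : Q.Monic := monic_prod_of_monic _ _ fun s _ => monic_X_sub_C s
  have hQd : Q.degree = k := by simp [hQ, degree_prod, hS]
  have hXQ : (X ^ k - Q).degree < (k : WithBot ℕ) := by
    have h := degree_sub_lt_left (p := (X ^ k : F[X])) (q := Q) (by rw [hQd, degree_X_pow])
      (pow_ne_zero _ X_ne_zero) (by rw [hQm.leadingCoeff, (monic_X_pow k).leadingCoeff])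
    rwa [degree_X_pow] at h
  have hLd : L.degree < k := by
    rw [← mem_degreeLT]
    refine Submodule.sum_mem _ fun i hi => mem_degreeLT.2 ?_
    exact (degree_C_mul_X_pow_le i _).trans_lt (by exact_mod_cast Finset.mem_range.1 hi)
  have hR : L + C (γ * f k) * (X ^ k - Q) = 0 := by
    apply eq_zero_of_degree_lt_of_eval_finset_eq_zero S
    · rw [hS, ← mem_degreeLT]
      refine Submodule.add_mem _ (mem_degreeLT.2 hLd) ?_
      rw [C_mul']
      exact Submodule.smul_mem _ _ (mem_degreeLT.2 hXQ)
    · intro x hx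
      have hQx : Q.eval x = 0 := by
        rw [hQ, eval_prod]
        exact Finset.prod_eq_zero hx (by simp)
      have := hroot x hx
      simpa [hL, eval_finsetSum, hQx] using this
  have hLc : ∀ i, i < k → L.coeff i = f i := by
    intro i hi
    simp [hL, coeff_C_mul, coeff_X_pow, hi.not_ge]
  by_cases hz : f k = 0
  · intro i hi
    rcases hi.eq_or_lt with rfl | hi
    · exact hz
    · rw [← hLc i hi]
      have : L = 0 := by simpa [hz] using hR
      simp [this]
  · exfalso
    -- Comparison of constant terms; `(-1)^k ∏ s` appears as `∏ (-s)`.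
    have hc : f 0 = γ * f k * ∏ s ∈ S, (-s) := by
      have h := congrArg (fun p => p.coeff 0) hR
      have hQ0 : Q.coeff 0 = ∏ s ∈ S, (-s) := by
        rw [coeff_zero_eq_eval_zero, hQ, eval_prod]; simp
      have hk0 : k ≠ 0 := by omega
      simp only [coeff_add, coeff_C_mul, coeff_sub, hLc 0 hk, hQ0, coeff_zero,
        coeff_X_pow, hk0.symm, if_false] at h
      linear_combination h
    have hneg : IsSquare (-1 : F) := isSquare_of_pow_eq hqodd hF hqodd.neg_one_pow
    have hprod : IsSquare (∏ s ∈ S, (-s)) := by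
      refine Finset.isSquare_prod _ fun s hs => ?_
      obtain ⟨a, -, rfl⟩ := hsq s hs
      rw [← neg_one_mul]
      exact hneg.mul (IsSquare.sq a)
    have hprod0 : ∏ s ∈ S, (-s) ≠ 0 := by
      refine Finset.prod_ne_zero_iff.2 fun s hs => ?_
      obtain ⟨a, ha, rfl⟩ := hsq s hs
      exact neg_ne_zero.2 (pow_ne_zero _ ha)
    have hγsq : IsSquare γ := by
      have : γ = f 0 / (f k * ∏ s ∈ S, (-s)) := by
        rw [hc]; field_simp
      rw [this]
      exact (isSquare_of_pow_eq hqodd hF h0).div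
        ((isSquare_of_pow_eq hqodd hF hfk).mul hprod)
    obtain ⟨a, ha⟩ := hγsq
    exact hγ a (by rw [ha, sq])

lemma root_bound {q : ℕ} (hqodd : Odd q) (hF : Fintype.card F = q ^ 2)
    {γ : F} (hγ : ∀ a : F, γ ≠ a ^ 2) {k : ℕ} (hk : 1 ≤ k)
    (f : ℕ → F) (h0 : f 0 ^ q = f 0) (hfk : f k ^ q = f k) (hne : ∃ i, i ≤ k ∧ f i ≠ 0)
    (Λ : Finset F) (hsq : ∀ x ∈ Λ, ∃ a : F, a ≠ 0 ∧ x = a ^ 2) :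
    Set.ncard {x : F | x ∈ Λ ∧
      ∑ i ∈ Finset.range k, f i * x ^ i + γ * f k * x ^ k = 0} ≤ k - 1 := by
  classical
  by_contra! hlt
  have hset : {x : F | x ∈ Λ ∧ ∑ i ∈ Finset.range k, f i * x ^ i + γ * f k * x ^ k = 0}
      = ↑(Λ.filter fun x => ∑ i ∈ Finset.range k, f i * x ^ i + γ * f k * x ^ k = 0) := by
    ext x; simp
  rw [hset, Set.ncard_coe_finset] at hlt
  obtain ⟨S, hST, hS⟩ := Finset.exists_subset_card_eq (Nat.le_of_pred_lt hlt)
  obtain ⟨i, hi, hfi⟩ := hne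
  exact hfi (coeffs_eq_zero hqodd hF hγ hk f h0 hfk S hS
    (fun x hx => hsq x (Finset.mem_filter.1 (hST hx)).1)
    (fun x hx => (Finset.mem_filter.1 (hST hx)).2) i hi)

end

theorem stmt_18 (q : ℕ) (hqodd : Odd q) (hpp : IsPrimePow q)
    (F : Type*) [Field F] [Fintype F] (hF : Fintype.card F = q ^ 2)
    (γ : F) (hγ0 : γ ≠ 0) (hγ : ∀ a : F, γ ≠ a ^ 2)
    (k : ℕ) (hk : 1 ≤ k) :
    -- (1) a polynomial `∑_{i<k} f_i X^i + γ f_k X^k` with `f_0, f_k` in the subfield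
    -- `E = {x : x^q = x}`, not all coefficients zero, has at most `k-1` roots among
    -- any finite set `Λ` of nonzero squares of `F`:
    (∀ f : ℕ → F, f 0 ^ q = f 0 → f k ^ q = f k → (∃ i, i ≤ k ∧ f i ≠ 0) →
        ∀ Λ : Finset F, (∀ x ∈ Λ, ∃ a : F, a ≠ 0 ∧ x = a ^ 2) →
          Set.ncard {x : F | x ∈ Λ ∧
              ∑ i ∈ Finset.range k, f i * x ^ i + γ * f k * x ^ k = 0} ≤ k - 1) ∧
      -- (2) consequently, evaluating at `ℓ ≥ k` distinct nonzero squares yields an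
      -- `E`-linear `(ℓ, q^{2k}, ℓ-k+1)` MDS code over `F`:
      ∀ (ℓ : ℕ) (lam : Fin ℓ → F), k ≤ ℓ → Function.Injective lam →
        (∀ j, ∃ a : F, a ≠ 0 ∧ lam j = a ^ 2) →
        Set.ncard {v : Fin ℓ → F | ∃ f : ℕ → F, f 0 ^ q = f 0 ∧ f k ^ q = f k ∧
              v = fun j => ∑ i ∈ Finset.range k, f i * lam j ^ i + γ * f k * lam j ^ k}
            = q ^ (2 * k) ∧
          ∀ v : Fin ℓ → F,
            (∃ f : ℕ → F, f 0 ^ q = f 0 ∧ f k ^ q = f k ∧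
              v = fun j => ∑ i ∈ Finset.range k, f i * lam j ^ i + γ * f k * lam j ^ k) →
            v ≠ 0 → ℓ - k + 1 ≤ Set.ncard {j : Fin ℓ | v j ≠ 0} := by
  classical
  refine ⟨fun f h0 hfk hne Λ hsq => root_bound hqodd hF hγ hk f h0 hfk hne Λ hsq, ?_⟩
  intro ℓ lam hkl hinj hsq
  -- A nonzero coefficient vector gives a word with at most `k - 1` zeros.
  have hzeros : ∀ f : ℕ → F, f 0 ^ q = f 0 → f k ^ q = f k → (∃ i, i ≤ k ∧ f i ≠ 0) →
      #{j : Fin ℓ | ∑ i ∈ Finset.range k, f i * lam j ^ i + γ * f k * lam j ^ k = 0} ≤ k - 1 := by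
    intro f h0 hfk hne
    have h := root_bound hqodd hF hγ hk f h0 hfk hne (univ.image lam) (by simpa using hsq)
    refine le_trans ?_ h
    rw [← Finset.card_image_of_injective _ hinj, ← Set.ncard_coe_finset]
    refine Set.ncard_le_ncard ?_ (Set.toFinite _)
    intro x hx
    simp only [coe_image, coe_filter, mem_univ, true_and, Set.mem_image, Set.mem_ofPred_eq] at hx
    obtain ⟨j, hj, rfl⟩ := hx
    exact ⟨by simp, hj⟩
  constructor
  · obtain ⟨m, rfl⟩ := Nat.exists_eq_add_of_le' hk
    -- Coefficient vectors, extended by zero to `ℕ → F`.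
    let ext : (Fin (m + 2) → F) → ℕ → F := fun g i => if h : i < m + 2 then g ⟨i, h⟩ else 0
    let ev : (ℕ → F) → Fin ℓ → F := fun f j =>
      ∑ i ∈ Finset.range (m + 1), f i * lam j ^ i + γ * f (m + 1) * lam j ^ (m + 1)
    let E : Finset F := {x : F | x ^ q = x}
    let A : Finset (Fin (m + 2) → F) := Fintype.piFinset fun i =>
      if i = 0 ∨ i = Fin.last (m + 1) then E else univ
    have hE : ∀ x, x ∈ E ↔ x ^ q = x := by simp [E]
    have hA : ∀ g, g ∈ A ↔ g 0 ^ q = g 0 ∧ g (Fin.last _) ^ q = g (Fin.last _) := by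
      intro g
      simp only [A, Fintype.mem_piFinset]
      constructor
      · intro h
        exact ⟨by simpa [hE] using h 0, by simpa [hE] using h (Fin.last _)⟩
      · rintro ⟨h1, h2⟩ i
        split_ifs with hi
        · rcases hi with rfl | rfl
          · exact (hE _).2 h1
          · exact (hE _).2 h2
        · simp
    have hext0 : ∀ g, ext g 0 = g 0 := fun g => by simp [ext]
    have hextl : ∀ g, ext g (m + 1) = g (Fin.last _) := fun g => by simp [ext, Fin.last]
    have hAcard : #A = q ^ (2 * (m + 1)) := by
      have hEc : #E = q := card_fixed hqodd.pos hF
      simp only [A, Fintype.card_piFinset]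
      rw [Fin.prod_univ_succ, Fin.prod_univ_castSucc]
      have : ∀ i : Fin m, ¬ (i.castSucc.succ = 0 ∨ i.castSucc.succ = Fin.last (m + 1)) := by
        intro i
        simp only [Fin.ext_iff, Fin.val_succ, Fin.val_castSucc, Fin.val_last, Fin.val_zero]
        omega
      simp only [this, if_false, Finset.card_univ, hF, Finset.prod_const, Fintype.card_fin,
        true_or, if_true, Fin.succ_last, or_true, hEc]
      ring
    have himage : {v : Fin ℓ → F | ∃ f : ℕ → F, f 0 ^ q = f 0 ∧ f (m + 1) ^ q = f (m + 1) ∧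
        v = fun j => ∑ i ∈ Finset.range (m + 1), f i * lam j ^ i
          + γ * f (m + 1) * lam j ^ (m + 1)} = Set.image (fun g => ev (ext g)) (A : Set _) := by
      apply Set.eq_of_subset_of_subset
      · rintro v ⟨f, h0, hl, rfl⟩
        refine ⟨fun i => f i, ?_, ?_⟩
        · rw [Finset.mem_coe, hA]
          exact ⟨by simpa using h0, by simpa using hl⟩
        · funext j
          simp only [ev, hextl, Fin.val_last]
          congr 1
          refine Finset.sum_congr rfl fun i hi => ?_
          have : i < m + 2 := by have := Finset.mem_range.1 hi; omega
          simp [ext, this]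
      · rintro v ⟨g, hg, rfl⟩
        rw [Finset.mem_coe, hA] at hg
        exact ⟨ext g, by rw [hext0]; exact hg.1, by rw [hextl]; exact hg.2, rfl⟩
    rw [himage, Set.InjOn.ncard_image, Set.ncard_coe_finset, hAcard]
    intro g hg g' hg' hgg
    rw [Finset.mem_coe, hA] at hg hg'
    by_contra hne
    obtain ⟨i, hi⟩ := Function.ne_iff.1 hne
    have hz := hzeros (fun n => ext g n - ext g' n)
      (by simp only [hext0]; rw [sub_pow_of_card hpp hF, hg.1, hg'.1])
      (by simp only [hextl]; rw [sub_pow_of_card hpp hF, hg.2, hg'.2])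
      ⟨i, by omega, by simpa [ext, sub_eq_zero] using hi⟩
    rw [Finset.filter_true_of_mem] at hz
    · simp at hz
      omega
    · intro j _
      have hj := congrFun hgg j
      simp only [ev] at hj
      simp only [sub_mul, mul_sub, Finset.sum_sub_distrib]
      linear_combination hj
  · rintro v ⟨f, h0, hfk, rfl⟩ hv
    have hne : ∃ i, i ≤ k ∧ f i ≠ 0 := by
      by_contra! h
      apply hv
      funext j
      rw [h k le_rfl, Finset.sum_eq_zero]
      · simp
      · intro i hi
        rw [h i (Finset.mem_range.1 hi).le, zero_mul]
    have hz := hzeros f h0 hfk hne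
    have hsum := Finset.card_filter_add_card_filter_not (s := (univ : Finset (Fin ℓ)))
      (fun j => ∑ i ∈ Finset.range k, f i * lam j ^ i + γ * f k * lam j ^ k = 0)
    have hset : {j : Fin ℓ | ∑ i ∈ Finset.range k, f i * lam j ^ i + γ * f k * lam j ^ k ≠ 0}
        = ↑(univ.filter fun j : Fin ℓ =>
          ¬ ∑ i ∈ Finset.range k, f i * lam j ^ i + γ * f k * lam j ^ k = 0) := by
      ext j; simp
    rw [hset, Set.ncard_coe_finset]
    rw [Finset.card_univ, Fintype.card_fin] at hsum
    omega
end
end
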